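/- arXiv:1011.0674 — 2 statements merged into one kernel-verified Lean document; each statement's English description precedes it below -/
import Mathlib

section
/- Let d ≥ 1 be an integer and, for t > 0, set F_n(t) = t⁴ + 1/(n t) + max{(n² t³)^{−4/(d+4)}, (n³ t⁷)^{−4/(2d+4)}} (the order of AMSE(b₁) + R_n(b₀*(b₁), b₁), where b₀*(b₁) is the optimal first-step bandwidth and AMSE(b₁) has order b₁⁴ + 1/(n b₁)). (1) If d ≤ 2, then inf_{t>0} F_n(t) ≍ n^{−4/5}; any sequence b₁* with F_n(b₁*) ≍ inf_{t>0} F_n(t) satisfies b₁* ≍ n^{−1/5}, and (F_n(b₁*))^{1/2} ≍ n^{−2/5}. (2) If d ≥ 3, then inf_{t>0} F_n(t) ≍ n^{−12/(2d+11)}; any sequence b₁* with F_n(b₁*) ≍ inf_{t>0} F_n(t) satisfies b₁* ≍ n^{−3/(2d+11)}, and (F_n(b₁*))^{1/2} ≍ n^{−6/(2d+11)}. -/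
open Filter Asymptotics

noncomputable section

/-- `a ≍ c`: there is `C > 0` with `a n / C ≤ c n ≤ C * a n` for all large `n`. -/
def Asymp (a c : ℕ → ℝ) : Prop :=
  ∃ C : ℝ, 0 < C ∧ ∀ᶠ n in atTop, a n / C ≤ c n ∧ c n ≤ C * a n

/-- The order `F_n(t)` of `AMSE(b₁) + R_n(b₀*(b₁), b₁)` at `b₁ = t`. -/
def Fseq (d n : ℕ) (t : ℝ) : ℝ :=
  t^4 + 1 / ((n : ℝ) * t)
  + max (((n : ℝ)^2 * t^3) ^ (-(4 : ℝ) / ((d : ℝ) + 4)))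
        (((n : ℝ)^3 * t^7) ^ (-(4 : ℝ) / (2 * (d : ℝ) + 4)))

/-- The infimum of `F_n` over positive bandwidths. -/
def FseqInf (d n : ℕ) : ℝ := ⨅ t : Set.Ioi (0 : ℝ), Fseq d n t

/-!
Write `r = n ^ (-α)` for the claimed optimal bandwidth, `α = 1/5` if `d ≤ 2` and
`α = 3/(2d+11)` if `d ≥ 3`. Two of the summands of `F_n` balance at `r`: the increasing term `t ^ 4`
and a decreasing term that equals `(t / r) ^ (-β) * r ^ 4` exactly. The decreasing term is
`1 / (n t)` (`β = 1`) if `d ≤ 2`, and `(n ^ 3 t ^ 7) ^ (-4/(2d+4))` (`β = 28/(2d+4)`) if `d ≥ 3`.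
The remaining summands are at most `r ^ 4` at `t = r`; on exponents of `n` this is where the
threshold between `d ≤ 2` and `d ≥ 3` comes from.

Hence `F_n(r) ≤ 4 r ^ 4`, while `F_n(t) ≥ r ^ 4` for all `t > 0`, because one of the two balancing
terms is at least `r ^ 4` on each side of `r`. So `inf F_n ≍ r ^ 4`. If `F_n(t) ≤ K r ^ 4`, then
both `(t / r) ^ 4` and `(t / r) ^ (-β)` are at most `K`, which confines `t / r` to a compact
subset of `(0, ∞)`. `asymp_of_balance` carries out this argument for general `α`, `β`.
-/

lemma pow_four_le_Fseq (d n : ℕ) {t : ℝ} (ht : 0 < t) : t ^ 4 ≤ Fseq d n t := by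
  have h1 : 0 ≤ 1 / ((n : ℝ) * t) := by positivity
  have h2 : 0 ≤ ((n : ℝ)^2 * t^3) ^ (-(4 : ℝ) / ((d : ℝ) + 4)) := by positivity
  have h3 := le_max_left (((n : ℝ)^2 * t^3) ^ (-(4 : ℝ) / ((d : ℝ) + 4)))
    (((n : ℝ)^3 * t^7) ^ (-(4 : ℝ) / (2 * (d : ℝ) + 4)))
  unfold Fseq
  linarith

lemma inv_le_Fseq (d n : ℕ) {t : ℝ} (ht : 0 < t) : 1 / ((n : ℝ) * t) ≤ Fseq d n t := by
  have h1 : 0 ≤ t ^ 4 := by positivity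
  have h2 : 0 ≤ ((n : ℝ)^2 * t^3) ^ (-(4 : ℝ) / ((d : ℝ) + 4)) := by positivity
  have h3 := le_max_left (((n : ℝ)^2 * t^3) ^ (-(4 : ℝ) / ((d : ℝ) + 4)))
    (((n : ℝ)^3 * t^7) ^ (-(4 : ℝ) / (2 * (d : ℝ) + 4)))
  unfold Fseq
  linarith

lemma rpow_le_Fseq (d n : ℕ) {t : ℝ} (ht : 0 < t) :
    ((n : ℝ)^3 * t^7) ^ (-(4 : ℝ) / (2 * (d : ℝ) + 4)) ≤ Fseq d n t := by
  have h1 : 0 ≤ t ^ 4 := by positivity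
  have h2 : 0 ≤ 1 / ((n : ℝ) * t) := by positivity
  have h3 := le_max_right (((n : ℝ)^2 * t^3) ^ (-(4 : ℝ) / ((d : ℝ) + 4)))
    (((n : ℝ)^3 * t^7) ^ (-(4 : ℝ) / (2 * (d : ℝ) + 4)))
  unfold Fseq
  linarith

/-- At `t = n ^ (-α)` all summands are powers of `n`, so the bound reduces to comparing
exponents. -/
lemma Fseq_rpow_le (d n : ℕ) (hn : 1 ≤ n) (α : ℝ) (h1 : 5 * α ≤ 1)
    (h2 : 4 * α * (2 * d + 4) ≤ 4 * (3 - 7 * α)) :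
    Fseq d n ((n : ℝ) ^ (-α)) ≤ 4 * ((n : ℝ) ^ (-α)) ^ 4 := by
  have hn1 : (1 : ℝ) ≤ n := by exact_mod_cast hn
  have hn0 : (0 : ℝ) < n := by linarith
  have hd0 : (0 : ℝ) ≤ d := by positivity
  have e4 : ((n : ℝ) ^ (-α)) ^ 4 = (n : ℝ) ^ (-(4 * α)) := by
    rw [← Real.rpow_mul_natCast hn0.le]; congr 1; push_cast; ring
  have b1 : 1 / ((n : ℝ) * (n : ℝ) ^ (-α)) ≤ ((n : ℝ) ^ (-α)) ^ 4 := by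
    have : 1 / ((n : ℝ) * (n : ℝ) ^ (-α)) = (n : ℝ) ^ (-(1 - α)) := by
      rw [Real.rpow_neg hn0.le (1 - α), sub_eq_add_neg, Real.rpow_add hn0, Real.rpow_one, one_div]
    rw [this, e4]
    exact Real.rpow_le_rpow_of_exponent_le hn1 (by linarith)
  have b2 : ((n : ℝ)^2 * ((n : ℝ) ^ (-α))^3) ^ (-(4 : ℝ) / ((d : ℝ) + 4))
      ≤ ((n : ℝ) ^ (-α)) ^ 4 := by
    have : (n : ℝ)^2 * ((n : ℝ) ^ (-α))^3 = (n : ℝ) ^ (2 - 3 * α) := by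
      rw [← Real.rpow_mul_natCast hn0.le, ← Real.rpow_natCast, ← Real.rpow_add hn0]
      congr 1; push_cast; ring
    rw [this, e4, ← Real.rpow_mul hn0.le]
    refine Real.rpow_le_rpow_of_exponent_le hn1 ?_
    rw [mul_div_assoc', div_le_iff₀ (by positivity)]
    linarith
  have b3 : ((n : ℝ)^3 * ((n : ℝ) ^ (-α))^7) ^ (-(4 : ℝ) / (2 * (d : ℝ) + 4))
      ≤ ((n : ℝ) ^ (-α)) ^ 4 := by
    have : (n : ℝ)^3 * ((n : ℝ) ^ (-α))^7 = (n : ℝ) ^ (3 - 7 * α) := by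
      rw [← Real.rpow_mul_natCast hn0.le, ← Real.rpow_natCast, ← Real.rpow_add hn0]
      congr 1; push_cast; ring
    rw [this, e4, ← Real.rpow_mul hn0.le]
    refine Real.rpow_le_rpow_of_exponent_le hn1 ?_
    rw [mul_div_assoc', div_le_iff₀ (by positivity)]
    linarith
  have b4 := max_le b2 b3
  have b5 : 0 ≤ ((n : ℝ) ^ (-α)) ^ 4 := by positivity
  unfold Fseq
  linarith

/-- The balancing argument: if `F_n` is of order at most `r ^ 4` at `r` and dominates a decreasing
term equal to `r ^ 4` at `t = r`, then `r` is the optimal bandwidth up to constants. -/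
lemma asymp_of_balance (d : ℕ) (r : ℕ → ℝ) (β : ℝ) (hβ : 0 < β) (hr : ∀ n, 1 ≤ n → 0 < r n)
    (hup : ∀ n, 1 ≤ n → Fseq d n (r n) ≤ 4 * r n ^ 4)
    (hlow : ∀ n, 1 ≤ n → ∀ t, 0 < t → (t / r n) ^ (-β) * r n ^ 4 ≤ Fseq d n t) :
    Asymp (fun n => FseqInf d n) (fun n => r n ^ 4) ∧
      ∀ b₁s : ℕ → ℝ, (∀ n, 0 < b₁s n) →
        Asymp (fun n => Fseq d n (b₁s n)) (fun n => FseqInf d n) →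
        Asymp b₁s r ∧ Asymp (fun n => Real.sqrt (Fseq d n (b₁s n))) (fun n => r n ^ 2) := by
  have hF : ∀ n, 1 ≤ n → ∀ t, 0 < t → r n ^ 4 ≤ Fseq d n t := by
    intro n hn t ht
    have hrn := hr n hn
    rcases le_total (r n) t with h | h
    · exact (pow_le_pow_left₀ hrn.le h 4).trans (pow_four_le_Fseq d n ht)
    · refine le_trans ?_ (hlow n hn t ht)
      have : 1 ≤ (t / r n) ^ (-β) :=
        Real.one_le_rpow_of_pos_of_le_one_of_nonpos (by positivity)
          ((div_le_one hrn).2 h) (by linarith)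
      exact le_mul_of_one_le_left (by positivity) this
  have hInf_ge : ∀ n, 1 ≤ n → r n ^ 4 ≤ FseqInf d n := fun n hn =>
    haveI : Nonempty (Set.Ioi (0 : ℝ)) := ⟨⟨1, Set.mem_Ioi.2 one_pos⟩⟩
    le_ciInf fun t => hF n hn t t.2
  have hInf_le : ∀ n, 1 ≤ n → FseqInf d n ≤ 4 * r n ^ 4 := fun n hn => by
    refine le_trans ?_ (hup n hn)
    refine ciInf_le (f := fun t : Set.Ioi (0 : ℝ) => Fseq d n t) ⟨0, ?_⟩ ⟨r n, hr n hn⟩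
    rintro _ ⟨t, rfl⟩
    have ht : (0 : ℝ) < t := t.2
    exact le_trans (by positivity) (pow_four_le_Fseq d n ht)
  refine ⟨⟨4, by norm_num, ?_⟩, ?_⟩
  · filter_upwards [eventually_ge_atTop 1] with n hn
    have := hInf_ge n hn
    have := hInf_le n hn
    have : 0 < r n ^ 4 := pow_pos (hr n hn) 4
    constructor <;> linarith
  intro b hb ⟨C, hC, hCb⟩
  set K : ℝ := max 1 (4 * C) with hK
  have hK1 : 1 ≤ K := le_max_left _ _
  have hK0 : 0 < K := by linarith
  have hKF : ∀ᶠ n in atTop, Fseq d n (b n) ≤ K * r n ^ 4 := by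
    filter_upwards [eventually_ge_atTop 1, hCb] with n hn h
    have h1 := (div_le_iff₀ hC).1 h.1
    have h2 := mul_le_mul_of_nonneg_right (hInf_le n hn) hC.le
    have h3 : 4 * C * r n ^ 4 ≤ K * r n ^ 4 :=
      mul_le_mul_of_nonneg_right (le_max_right _ _) (pow_pos (hr n hn) 4).le
    linarith
  refine ⟨⟨max K (K ^ (1 / β)), by positivity, ?_⟩, ⟨K, hK0, ?_⟩⟩
  · filter_upwards [eventually_ge_atTop 1, hKF] with n hn h
    have hrn := hr n hn
    have hr4 : 0 < r n ^ 4 := pow_pos hrn 4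
    have hbn := hb n
    have hx : 0 < b n / r n := by positivity
    have h1 : (b n / r n) ^ 4 ≤ K := by
      rw [div_pow, div_le_iff₀ hr4]
      exact (pow_four_le_Fseq d n hbn).trans h
    have h2 : (b n / r n) ^ (-β) ≤ K :=
      le_of_mul_le_mul_right ((hlow n hn _ hbn).trans h) hr4
    constructor
    · rw [div_le_iff₀ (by positivity), mul_comm, ← div_le_iff₀ hrn]
      refine le_trans ?_ (le_max_left _ _)
      rcases le_total (b n / r n) 1 with h | h
      · exact h.trans hK1
      · exact (le_self_pow₀ h (by norm_num)).trans h1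
    · rw [← div_le_iff₀ hbn]
      refine le_trans ?_ (le_max_right _ _)
      -- Raising `(b / r) ^ (-β) ≤ K` to the power `1 / β` turns it into `r / b ≤ K ^ (1 / β)`.
      have h3 := Real.rpow_le_rpow (by positivity) h2 (by positivity : 0 ≤ 1 / β)
      rw [← Real.rpow_mul hx.le, show -β * (1 / β) = -1 by field_simp, Real.rpow_neg_one,
        inv_div] at h3
      exact h3
  · filter_upwards [eventually_ge_atTop 1, hKF] with n hn h
    have hr2 : 0 < r n ^ 2 := pow_pos (hr n hn) 2
    constructor
    · rw [div_le_iff₀ hK0]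
      refine Real.sqrt_le_iff.2 ⟨by positivity, h.trans ?_⟩
      nlinarith [mul_nonneg (sub_nonneg.2 hK1) (mul_pos hK0 (pow_pos hr2 2)).le]
    · have h1 : r n ^ 2 ≤ Real.sqrt (Fseq d n (b n)) := by
        refine Real.le_sqrt_of_sq_le ?_
        rw [← pow_mul]
        exact hF n hn _ (hb n)
      exact h1.trans (le_mul_of_one_le_left (Real.sqrt_nonneg _) hK1)

/-- Theorem 3.3: the optimal second-step bandwidth. -/
theorem optimal_second_step_bandwidth (d : ℕ) (hd : 1 ≤ d) :
    -- (1) the case d ≤ 2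
    (d ≤ 2 →
      Asymp (fun n => FseqInf d n) (fun n => (n : ℝ) ^ (-(4 : ℝ) / 5)) ∧
      ∀ b₁s : ℕ → ℝ, (∀ n, 0 < b₁s n) →
        Asymp (fun n => Fseq d n (b₁s n)) (fun n => FseqInf d n) →
        Asymp b₁s (fun n => (n : ℝ) ^ (-(1 : ℝ) / 5)) ∧
        Asymp (fun n => Real.sqrt (Fseq d n (b₁s n))) (fun n => (n : ℝ) ^ (-(2 : ℝ) / 5)))
    ∧
    -- (2) the case d ≥ 3
    (3 ≤ d →
      Asymp (fun n => FseqInf d n) (fun n => (n : ℝ) ^ (-(12 : ℝ) / (2 * (d : ℝ) + 11))) ∧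
      ∀ b₁s : ℕ → ℝ, (∀ n, 0 < b₁s n) →
        Asymp (fun n => Fseq d n (b₁s n)) (fun n => FseqInf d n) →
        Asymp b₁s (fun n => (n : ℝ) ^ (-(3 : ℝ) / (2 * (d : ℝ) + 11))) ∧
        Asymp (fun n => Real.sqrt (Fseq d n (b₁s n)))
          (fun n => (n : ℝ) ^ (-(6 : ℝ) / (2 * (d : ℝ) + 11)))) := by
  constructor
  · intro hd2
    have hd2' : (d : ℝ) ≤ 2 := by exact_mod_cast hd2
    have key := asymp_of_balance d (fun n => (n : ℝ) ^ (-(1 : ℝ) / 5)) 1 one_pos ?_ ?_ ?_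
    · have e4 : ∀ n : ℕ, ((n : ℝ) ^ (-(1 : ℝ) / 5)) ^ 4 = (n : ℝ) ^ (-(4 : ℝ) / 5) := fun n => by
        rw [← Real.rpow_mul_natCast n.cast_nonneg]; congr 1; push_cast; ring
      have e2 : ∀ n : ℕ, ((n : ℝ) ^ (-(1 : ℝ) / 5)) ^ 2 = (n : ℝ) ^ (-(2 : ℝ) / 5) := fun n => by
        rw [← Real.rpow_mul_natCast n.cast_nonneg]; congr 1; push_cast; ring
      simpa only [e4, e2] using key
    · intro n hn
      have : (0 : ℝ) < n := by exact_mod_cast hn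
      positivity
    · intro n hn
      rw [neg_div]
      exact Fseq_rpow_le d n hn (1 / 5) (by norm_num) (by linarith)
    · intro n hn t ht
      have hn0 : (0 : ℝ) < n := by exact_mod_cast hn
      refine le_trans (le_of_eq ?_) (inv_le_Fseq d n ht)
      have hr : 0 < (n : ℝ) ^ (-(1 : ℝ) / 5) := by positivity
      -- The rate solves `r ^ 4 = 1 / (n r)`.
      have h5 : ((n : ℝ) ^ (-(1 : ℝ) / 5)) ^ 5 * n = 1 := by
        rw [← Real.rpow_mul_natCast hn0.le, ← Real.rpow_add_one hn0.ne']
        norm_num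
      simp only [Real.rpow_neg_one, inv_div]
      rw [div_mul_eq_mul_div, div_eq_div_iff ht.ne' (by positivity)]
      linear_combination t * h5
  · intro hd3
    have hd3' : (3 : ℝ) ≤ d := by exact_mod_cast hd3
    have hD : (0 : ℝ) < 2 * d + 11 := by positivity
    have key := asymp_of_balance d (fun n => (n : ℝ) ^ (-(3 : ℝ) / (2 * (d : ℝ) + 11)))
      (28 / (2 * d + 4)) (by positivity) ?_ ?_ ?_
    · have e4 : ∀ n : ℕ, ((n : ℝ) ^ (-(3 : ℝ) / (2 * (d : ℝ) + 11))) ^ 4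
          = (n : ℝ) ^ (-(12 : ℝ) / (2 * (d : ℝ) + 11)) := fun n => by
        rw [← Real.rpow_mul_natCast n.cast_nonneg]; congr 1; push_cast; ring
      have e2 : ∀ n : ℕ, ((n : ℝ) ^ (-(3 : ℝ) / (2 * (d : ℝ) + 11))) ^ 2
          = (n : ℝ) ^ (-(6 : ℝ) / (2 * (d : ℝ) + 11)) := fun n => by
        rw [← Real.rpow_mul_natCast n.cast_nonneg]; congr 1; push_cast; ring
      simpa only [e4, e2] using key
    · intro n hn
      have : (0 : ℝ) < n := by exact_mod_cast hn
      positivity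
    · intro n hn
      rw [neg_div]
      have hα : 3 / (2 * (d : ℝ) + 11) * (2 * d + 11) = 3 := by field_simp
      set α := 3 / (2 * (d : ℝ) + 11) with hαdef
      have hα0 : 0 < α := by positivity
      have h1 : 5 * α ≤ 1 := by nlinarith
      exact Fseq_rpow_le d n hn α h1 (by nlinarith)
    · intro n hn t ht
      have hn0 : (0 : ℝ) < n := by exact_mod_cast hn
      refine le_trans (le_of_eq ?_) (rpow_le_Fseq d n ht)
      set r := (n : ℝ) ^ (-(3 : ℝ) / (2 * (d : ℝ) + 11)) with hrdef
      have hr : 0 < r := by positivity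
      have h1 : (n : ℝ) ^ 3 * t ^ 7 = (t / r) ^ 7 * ((n : ℝ) ^ 3 * r ^ 7) := by
        field_simp
      -- The rate solves `r ^ 4 = (n ^ 3 r ^ 7) ^ (-4 / (2 d + 4))`.
      have h2 : ((n : ℝ) ^ 3 * r ^ 7) ^ (-(4 : ℝ) / (2 * (d : ℝ) + 4)) = r ^ 4 := by
        rw [hrdef, ← Real.rpow_mul_natCast hn0.le, ← Real.rpow_mul_natCast hn0.le,
          ← Real.rpow_natCast, ← Real.rpow_add hn0, ← Real.rpow_mul hn0.le]
        congr 1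
        push_cast
        field_simp
        ring
      rw [h1, Real.mul_rpow (by positivity) (by positivity), h2,
        ← Real.rpow_natCast_mul (by positivity)]
      congr 2
      push_cast
      ring
end
end

section
/- Let d ≥ 1 be an integer and, for t > 0, set G_n(t) = t⁴ + 1/(n t) + 1/n + max{(n² t³)^{−4/(d+4)}, (n³ t⁷)^{−4/(2d+4)}} (the order of AMSE(b₀*, h) + RT_n(b₀*, b₀*, h) at h = t, where b₀* = b₀*(h) is the optimal first-step bandwidth). (1) If d ≤ 2, then inf_{t>0} G_n(t) ≍ n^{−4/5}; any sequence h* with G_n(h*) ≍ inf_{t>0} G_n(t) satisfies h* ≍ n^{−1/5}, and (G_n(h*))^{1/2} ≍ n^{−2/5}. (2) If d ≥ 3, then inf_{t>0} G_n(t) ≍ n^{−12/(2d+11)}; any sequence h* with G_n(h*) ≍ inf_{t>0} G_n(t) satisfies h* ≍ n^{−3/(2d+11)}, and (G_n(h*))^{1/2} ≍ n^{−6/(2d+11)}. -/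
/-!
Write `t = s * n ^ q`, where `q` is the claimed exponent of the optimal bandwidth, and put
`r = n ^ (4 * q)`. The bias term gives `G_n(t) ≥ t ^ 4 = r * s ^ 4`, and a single variance-type term
gives `G_n(t) ≥ r * s ^ (-p)` with `p > 0`: this is `1 / (n t)`, with `p = 1`, when `d ≤ 2`, and the
second entry of the maximum, with `p = 28 / (2 * d + 4)`, when `d ≥ 3`. One of `s ^ 4`, `s ^ (-p)` is
at least `1`, so `G_n ≥ r` everywhere, while comparing exponents shows `G_n(n ^ q) ≤ 4 * r`. Hence
the infimum has order `r`, and `G_n(t) ≤ K * r` forces both `s ^ 4 ≤ K` and `s ^ (-p) ≤ K`, which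
confines `s` to a fixed compact subset of `(0, ∞)`. These consequences are `asymp_of_balance`.
-/

open Filter Asymptotics

noncomputable section

/-- The order `G_n(t)` of `AMSE(b₀*,h) + RT_n(b₀*,b₀*,h)` at `h = t`. -/
def Gseq (d n : ℕ) (t : ℝ) : ℝ :=
  t^4 + 1 / ((n : ℝ) * t) + 1 / (n : ℝ)
  + max (((n : ℝ)^2 * t^3) ^ (-(4 : ℝ) / ((d : ℝ) + 4)))
        (((n : ℝ)^3 * t^7) ^ (-(4 : ℝ) / (2 * (d : ℝ) + 4)))

/-- The infimum of `G_n` over positive bandwidths. -/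
def GseqInf (d n : ℕ) : ℝ := ⨅ t : Set.Ioi (0 : ℝ), Gseq d n t

/-- If `G_n` dominates its bias term and a decreasing power of `t` that has the same order as the
bias at `t = n ^ q`, and `G_n(n ^ q)` is of no larger order, then `n ^ q` is the order of every
order-optimal bandwidth and `n ^ (4 * q)` the order of the infimum. -/
lemma asymp_of_balance_s8 (d : ℕ) (q p : ℝ) (hp : 0 < p)
    (hlow4 : ∀ n : ℕ, 1 ≤ n → ∀ t : ℝ, 0 < t →
      (n : ℝ) ^ (4 * q) * (t / (n : ℝ) ^ q) ^ 4 ≤ Gseq d n t)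
    (hlowp : ∀ n : ℕ, 1 ≤ n → ∀ t : ℝ, 0 < t →
      (n : ℝ) ^ (4 * q) * (t / (n : ℝ) ^ q) ^ (-p) ≤ Gseq d n t)
    (hup : ∀ n : ℕ, 1 ≤ n → Gseq d n ((n : ℝ) ^ q) ≤ 4 * (n : ℝ) ^ (4 * q)) :
    Asymp (fun n => GseqInf d n) (fun n => (n : ℝ) ^ (4 * q)) ∧
      ∀ hs : ℕ → ℝ, (∀ n, 0 < hs n) →
        Asymp (fun n => Gseq d n (hs n)) (fun n => GseqInf d n) →
        Asymp hs (fun n => (n : ℝ) ^ q) ∧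
        Asymp (fun n => Real.sqrt (Gseq d n (hs n))) (fun n => (n : ℝ) ^ (2 * q)) := by
  have hpos : ∀ n : ℕ, 1 ≤ n → ∀ e : ℝ, 0 < (n : ℝ) ^ e := fun n hn e =>
    Real.rpow_pos_of_pos (by exact_mod_cast hn) e
  have hlow : ∀ n : ℕ, 1 ≤ n → ∀ t : ℝ, 0 < t → (n : ℝ) ^ (4 * q) ≤ Gseq d n t := by
    intro n hn t ht
    have hs : 0 < t / (n : ℝ) ^ q := div_pos ht (hpos n hn q)
    rcases le_total 1 (t / (n : ℝ) ^ q) with h | h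
    · exact (le_mul_of_one_le_right (hpos n hn _).le (one_le_pow₀ h)).trans (hlow4 n hn t ht)
    · exact (le_mul_of_one_le_right (hpos n hn _).le
        (Real.one_le_rpow_of_pos_of_le_one_of_nonpos hs h (by linarith))).trans (hlowp n hn t ht)
  have hinf_low : ∀ n : ℕ, 1 ≤ n → (n : ℝ) ^ (4 * q) ≤ GseqInf d n := fun n hn =>
    le_ciInf fun t => hlow n hn t t.2
  have hinf_up : ∀ n : ℕ, 1 ≤ n → GseqInf d n ≤ 4 * (n : ℝ) ^ (4 * q) := by
    intro n hn
    refine le_trans ?_ (hup n hn)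
    refine ciInf_le (f := fun t : Set.Ioi (0 : ℝ) => Gseq d n t) ⟨(n : ℝ) ^ (4 * q), ?_⟩
      ⟨(n : ℝ) ^ q, hpos n hn q⟩
    rintro _ ⟨t, rfl⟩
    exact hlow n hn t t.2
  refine ⟨⟨4, by norm_num, ?_⟩, ?_⟩
  · filter_upwards [eventually_ge_atTop 1] with n hn
    have h1 := hinf_low n hn
    have h2 := hinf_up n hn
    have h3 := hpos n hn (4 * q)
    constructor <;> linarith
  rintro hs hs0 ⟨C, hC, hev⟩
  set K : ℝ := max 1 (4 * C) with hK
  have hK1 : 1 ≤ K := le_max_left _ _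
  have hK0 : 0 < K := by linarith
  have key : ∀ᶠ n : ℕ in atTop, 1 ≤ n ∧ Gseq d n (hs n) ≤ K * (n : ℝ) ^ (4 * q) := by
    filter_upwards [hev, eventually_ge_atTop 1] with n h hn
    refine ⟨hn, ?_⟩
    have h1 := (div_le_iff₀ hC).1 h.1
    have h2 := mul_le_mul_of_nonneg_right (hinf_up n hn) hC.le
    have h3 := mul_le_mul_of_nonneg_right (le_max_right 1 (4 * C)) (hpos n hn (4 * q)).le
    rw [← hK] at h3
    linarith
  have hKp : 0 < K ^ p⁻¹ := Real.rpow_pos_of_pos hK0 _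
  refine ⟨⟨K + K ^ p⁻¹, by positivity, ?_⟩, ⟨K, hK0, ?_⟩⟩
  · filter_upwards [key] with n hn
    obtain ⟨hn, hG⟩ := hn
    have hr := hpos n hn (4 * q)
    have hq := hpos n hn q
    set s := hs n / (n : ℝ) ^ q with hsdef
    have hspos : 0 < s := div_pos (hs0 n) hq
    have e : hs n = s * (n : ℝ) ^ q := by rw [hsdef]; field_simp
    have h4 : s ^ 4 ≤ K := by
      have := (hlow4 n hn _ (hs0 n)).trans hG
      rw [mul_comm] at this
      exact le_of_mul_le_mul_right this hr
    have h5 : s ^ (-p) ≤ K := by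
      have := (hlowp n hn _ (hs0 n)).trans hG
      rw [mul_comm] at this
      exact le_of_mul_le_mul_right this hr
    have hsK : s ≤ K := by
      rcases le_total 1 s with h | h
      · exact (le_self_pow₀ h (by norm_num)).trans h4
      · linarith
    have hsK' : 1 ≤ K ^ p⁻¹ * s := by
      have h6 := Real.rpow_le_rpow (Real.rpow_nonneg hspos.le _) h5 (inv_nonneg.2 hp.le)
      rw [← Real.rpow_mul hspos.le, neg_mul, mul_inv_cancel₀ hp.ne', Real.rpow_neg_one] at h6
      calc (1 : ℝ) = s⁻¹ * s := (inv_mul_cancel₀ hspos.ne').symm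
        _ ≤ _ := mul_le_mul_of_nonneg_right h6 hspos.le
    rw [e]
    constructor
    · rw [div_le_iff₀ (by positivity), mul_comm]
      exact mul_le_mul_of_nonneg_left (by linarith) hq.le
    · rw [← mul_assoc]
      exact le_mul_of_one_le_left hq.le (by nlinarith)
  · filter_upwards [key] with n hn
    obtain ⟨hn, hG⟩ := hn
    have hr := hpos n hn (2 * q)
    have hsq : (n : ℝ) ^ (4 * q) = ((n : ℝ) ^ (2 * q)) ^ 2 := by
      rw [← Real.rpow_mul_natCast (Nat.cast_nonneg n)]
      congr 1
      push_cast
      ring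
    have hl := hlow n hn _ (hs0 n)
    rw [hsq] at hG hl
    constructor
    · rw [div_le_iff₀ hK0, Real.sqrt_le_left (by positivity)]
      nlinarith [mul_nonneg (mul_nonneg hK0.le (sub_nonneg.2 hK1)) (sq_nonneg ((n : ℝ) ^ (2 * q)))]
    · exact (Real.le_sqrt_of_sq_le hl).trans (le_mul_of_one_le_left (Real.sqrt_nonneg _) hK1)

/-- The bias term of `G_n` on the scale `t = s * n ^ q`. -/
lemma bias_le_Gseq (d : ℕ) (q : ℝ) (n : ℕ) (hn : 1 ≤ n) (t : ℝ) (ht : 0 < t) :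
    (n : ℝ) ^ (4 * q) * (t / (n : ℝ) ^ q) ^ 4 ≤ Gseq d n t := by
  have hn0 : (0 : ℝ) < n := by exact_mod_cast hn
  have hq : 0 < (n : ℝ) ^ q := Real.rpow_pos_of_pos hn0 q
  have e : (n : ℝ) ^ (4 * q) = ((n : ℝ) ^ q) ^ 4 := by
    rw [← Real.rpow_mul_natCast hn0.le]
    congr 1
    push_cast
    ring
  have e2 : (n : ℝ) ^ (4 * q) * (t / (n : ℝ) ^ q) ^ 4 = t ^ 4 := by
    rw [e]
    field_simp
  rw [e2, Gseq]
  have h1 : 0 < 1 / ((n : ℝ) * t) := by positivity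
  have h2 : 0 < 1 / (n : ℝ) := by positivity
  have h3 : 0 < ((n : ℝ) ^ 2 * t ^ 3) ^ (-(4 : ℝ) / ((d : ℝ) + 4)) := by positivity
  have h4 := h3.trans_le (le_max_left _
    (((n : ℝ) ^ 3 * t ^ 7) ^ (-(4 : ℝ) / (2 * (d : ℝ) + 4))))
  linarith

/-- Each of the two entries of the maximum in `G_n` is a single power of `n` times a power of
`s = t / n ^ q`. -/
lemma rpow_entry (n : ℕ) (hn : 1 ≤ n) (q t e : ℝ) (ht : 0 < t) (a b : ℕ) :
    ((n : ℝ) ^ a * t ^ b) ^ e =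
      (n : ℝ) ^ ((a + b * q) * e) * (t / (n : ℝ) ^ q) ^ (b * e) := by
  have hn0 : (0 : ℝ) < n := by exact_mod_cast hn
  rw [Real.mul_rpow (by positivity) (by positivity), Real.div_rpow ht.le (by positivity),
    ← Real.rpow_natCast, ← Real.rpow_natCast, ← Real.rpow_mul hn0.le, ← Real.rpow_mul ht.le,
    ← Real.rpow_mul hn0.le, add_mul, Real.rpow_add hn0,
    show (b : ℝ) * q * e = q * (b * e) by ring]
  have : (n : ℝ) ^ (q * (b * e)) ≠ 0 := (Real.rpow_pos_of_pos hn0 _).ne'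
  field_simp

/-- At `t = n ^ q` all terms of `G_n` are powers of `n`, so comparing their exponents with `4 * q`
suffices. -/
lemma Gseq_rpow_le (d : ℕ) (q : ℝ) (h1 : -1 - q ≤ 4 * q) (h2 : -1 ≤ 4 * q)
    (h3 : (2 + 3 * q) * (-(4 : ℝ) / ((d : ℝ) + 4)) ≤ 4 * q)
    (h4 : (3 + 7 * q) * (-(4 : ℝ) / (2 * (d : ℝ) + 4)) ≤ 4 * q) (n : ℕ) (hn : 1 ≤ n) :
    Gseq d n ((n : ℝ) ^ q) ≤ 4 * (n : ℝ) ^ (4 * q) := by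
  have hn1 : (1 : ℝ) ≤ n := by exact_mod_cast hn
  have hn0 : (0 : ℝ) < n := by linarith
  have hq : 0 < (n : ℝ) ^ q := Real.rpow_pos_of_pos hn0 q
  have mono : ∀ e : ℝ, e ≤ 4 * q → (n : ℝ) ^ e ≤ (n : ℝ) ^ (4 * q) := fun e he =>
    Real.rpow_le_rpow_of_exponent_le hn1 he
  have e0 : ((n : ℝ) ^ q) ^ 4 = (n : ℝ) ^ (4 * q) := by
    rw [← Real.rpow_mul_natCast hn0.le]
    congr 1
    push_cast
    ring
  have e1 : 1 / ((n : ℝ) * (n : ℝ) ^ q) = (n : ℝ) ^ (-1 - q) := by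
    rw [Real.rpow_sub hn0, Real.rpow_neg_one]
    field_simp
  have e2 : 1 / (n : ℝ) = (n : ℝ) ^ (-1 : ℝ) := by rw [Real.rpow_neg_one, one_div]
  have e3 := rpow_entry n hn q ((n : ℝ) ^ q) (-(4 : ℝ) / ((d : ℝ) + 4)) hq 2 3
  have e4 := rpow_entry n hn q ((n : ℝ) ^ q) (-(4 : ℝ) / (2 * (d : ℝ) + 4)) hq 3 7
  rw [div_self hq.ne', Real.one_rpow, mul_one] at e3 e4
  push_cast at e3 e4
  rw [Gseq, e0, e1, e2, e3, e4]
  have := max_le (mono _ h3) (mono _ h4)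
  linarith [mono _ h1, mono _ h2]

/-- Theorem 4.3: the optimal second-step bandwidth for the integral estimator. -/
theorem optimal_second_step_bandwidth_integral (d : ℕ) (hd : 1 ≤ d) :
    -- (1) the case d ≤ 2
    (d ≤ 2 →
      Asymp (fun n => GseqInf d n) (fun n => (n : ℝ) ^ (-(4 : ℝ) / 5)) ∧
      ∀ hs : ℕ → ℝ, (∀ n, 0 < hs n) →
        Asymp (fun n => Gseq d n (hs n)) (fun n => GseqInf d n) →
        Asymp hs (fun n => (n : ℝ) ^ (-(1 : ℝ) / 5)) ∧
        Asymp (fun n => Real.sqrt (Gseq d n (hs n))) (fun n => (n : ℝ) ^ (-(2 : ℝ) / 5)))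
    ∧
    -- (2) the case d ≥ 3
    (3 ≤ d →
      Asymp (fun n => GseqInf d n) (fun n => (n : ℝ) ^ (-(12 : ℝ) / (2 * (d : ℝ) + 11))) ∧
      ∀ hs : ℕ → ℝ, (∀ n, 0 < hs n) →
        Asymp (fun n => Gseq d n (hs n)) (fun n => GseqInf d n) →
        Asymp hs (fun n => (n : ℝ) ^ (-(3 : ℝ) / (2 * (d : ℝ) + 11))) ∧
        Asymp (fun n => Real.sqrt (Gseq d n (hs n)))
          (fun n => (n : ℝ) ^ (-(6 : ℝ) / (2 * (d : ℝ) + 11)))) := by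
  have hd0 : (1 : ℝ) ≤ d := by exact_mod_cast hd
  constructor
  · intro hd2
    have hd2' : (d : ℝ) ≤ 2 := by exact_mod_cast hd2
    have H := asymp_of_balance_s8 d (-(1 : ℝ) / 5) 1 one_pos (bias_le_Gseq d _) ?_
      (Gseq_rpow_le d _ (by norm_num) (by norm_num) ?_ ?_)
    · rw [show (-(4 : ℝ) / 5) = 4 * (-(1 : ℝ) / 5) by norm_num,
        show (-(2 : ℝ) / 5) = 2 * (-(1 : ℝ) / 5) by norm_num]
      exact H
    · intro n hn t ht
      have hn0 : (0 : ℝ) < n := by exact_mod_cast hn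
      have e : (n : ℝ) ^ (4 * (-(1 : ℝ) / 5)) * (t / (n : ℝ) ^ (-(1 : ℝ) / 5)) ^ (-(1 : ℝ))
          = 1 / ((n : ℝ) * t) := by
        rw [Real.rpow_neg_one, inv_div, ← mul_div_assoc, ← Real.rpow_add hn0,
          show 4 * (-(1 : ℝ) / 5) + -(1 : ℝ) / 5 = -1 by norm_num, Real.rpow_neg_one]
        field_simp
      rw [e, Gseq]
      have h1 : 0 < t ^ 4 := by positivity
      have h2 : 0 < 1 / (n : ℝ) := by positivity
      have h3 : 0 < ((n : ℝ) ^ 2 * t ^ 3) ^ (-(4 : ℝ) / ((d : ℝ) + 4)) := by positivity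
      have h4 := h3.trans_le (le_max_left _
        (((n : ℝ) ^ 3 * t ^ 7) ^ (-(4 : ℝ) / (2 * (d : ℝ) + 4))))
      linarith
    · rw [← mul_div_assoc, div_le_iff₀ (by positivity)]
      linarith
    · rw [← mul_div_assoc, div_le_iff₀ (by positivity)]
      linarith
  · intro hd3
    have hd3' : (3 : ℝ) ≤ d := by exact_mod_cast hd3
    have hD : (0 : ℝ) < 2 * d + 11 := by positivity
    obtain ⟨q, hq⟩ : ∃ q : ℝ, q = -(3 : ℝ) / (2 * (d : ℝ) + 11) := ⟨_, rfl⟩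
    have hqD : q * (2 * d + 11) = -3 := by rw [hq]; field_simp
    -- At this `q` the bias and the second entry of the maximum have equal order.
    have hbal : (3 + 7 * q) * (-(4 : ℝ) / (2 * (d : ℝ) + 4)) = 4 * q := by
      rw [← mul_div_assoc, div_eq_iff (by positivity)]
      linarith
    have hq5 : -1 ≤ 5 * q := by nlinarith
    have hq0 : q ≤ 0 := by nlinarith
    have H := asymp_of_balance_s8 d q (7 * (4 / (2 * (d : ℝ) + 4))) (by positivity)
      (bias_le_Gseq d _) ?_ (Gseq_rpow_le d _ (by linarith) (by linarith) ?_ hbal.le)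
    · rw [show (-(12 : ℝ) / (2 * (d : ℝ) + 11)) = 4 * q by rw [hq]; ring,
        show (-(6 : ℝ) / (2 * (d : ℝ) + 11)) = 2 * q by rw [hq]; ring, ← hq]
      exact H
    · intro n hn t ht
      have hn0 : (0 : ℝ) < n := by exact_mod_cast hn
      have e := rpow_entry n hn q t (-(4 : ℝ) / (2 * (d : ℝ) + 4)) ht 3 7
      push_cast at e
      rw [hbal, show 7 * (-(4 : ℝ) / (2 * (d : ℝ) + 4)) = -(7 * (4 / (2 * (d : ℝ) + 4))) by ring]
        at e
      rw [← e, Gseq]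
      have h1 : 0 < t ^ 4 := by positivity
      have h2 : 0 < 1 / (n : ℝ) := by positivity
      have h3 : 0 < 1 / ((n : ℝ) * t) := by positivity
      have h4 := le_max_right (((n : ℝ) ^ 2 * t ^ 3) ^ (-(4 : ℝ) / ((d : ℝ) + 4)))
        (((n : ℝ) ^ 3 * t ^ 7) ^ (-(4 : ℝ) / (2 * (d : ℝ) + 4)))
      linarith
    · rw [← mul_div_assoc, div_le_iff₀ (by positivity)]
      nlinarith
end
end
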